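/- Let H be a Heyting algebra, B a finite Boolean algebra, and ⊢ the entailment relation of B-valued Heyting algebra maps on H. Then for every (x,a) ∈ H × B both {(x,a)} ⊢ {(¬¬x, a)} and {(¬¬x, a)} ⊢ {(x,a)} hold, where ¬ denotes the Heyting negation ¬x = x → 0. -/

import Mathlib

/-- An entailment relation on a set `S`: a relation between finite subsets of `S`
satisfying reflexivity (R), monotonicity (M) and transitivity/cut (T). -/
def IsEntailment {S : Type*} [DecidableEq S] (E : Finset S → Finset S → Prop) : Prop :=
  (∀ X Y : Finset S, (∃ x, x ∈ X ∧ x ∈ Y) → E X Y) ∧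
  (∀ X X' Y Y' : Finset S, E X Y → E (X ∪ X') (Y ∪ Y')) ∧
  (∀ X Y : Finset S, ∀ z : S, E X (insert z Y) → E (insert z X) Y → E X Y)

variable (H : Type*) (B : Type*) [HeytingAlgebra H] [BooleanAlgebra B]
  [Fintype B] [DecidableEq H] [DecidableEq B]

/-- The generating axioms (s), (∧), (∨), (→), (0), (1), (t) for the entailment relation
of `B`-valued Heyting algebra maps on `H`. -/
def HeytingAxioms : Finset (H × B) → Finset (H × B) → Prop := fun X Y =>
  (∃ x a b, a ≠ b ∧ X = {(x, a), (x, b)} ∧ Y = ∅) ∨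
  (∃ x y a b, X = {(x, a), (y, b)} ∧ Y = {(x ⊓ y, a ⊓ b)}) ∨
  (∃ x y a b, X = {(x, a), (y, b)} ∧ Y = {(x ⊔ y, a ⊔ b)}) ∨
  (∃ x y a b, X = {(x, a), (y, b)} ∧ Y = {(x ⇨ y, a ⇨ b)}) ∨
  (X = ∅ ∧ Y = {((⊥ : H), (⊥ : B))}) ∨
  (X = ∅ ∧ Y = {((⊤ : H), (⊤ : B))}) ∨
  (∃ x : H, X = ∅ ∧ Y = Finset.univ.image (fun a : B => (x, a)))

/-- The least entailment relation on `H × B` containing all the generating axioms: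
the entailment relation of `B`-valued Heyting algebra maps on `H`. -/
def HeytingEntails (X Y : Finset (H × B)) : Prop :=
  ∀ E : Finset (H × B) → Finset (H × B) → Prop,
    IsEntailment E → (∀ X' Y', HeytingAxioms H B X' Y' → E X' Y') → E X Y

/-!
Implication by `(⊥, ⊥)`, which is entailed outright, gives `(x, a) ⊢ (xᶜ, aᶜ)`; applying this twice
yields `(x, a) ⊢ (xᶜᶜ, a)`, as `aᶜᶜ = a` in `B`. The converse comes for free: `x` takes some value
`b`, and `xᶜᶜ` then takes the value `b` as well, so `b` must be the value `a` assumed for `xᶜᶜ`.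
-/

namespace IsEntailment

variable {S : Type*} [DecidableEq S] {E : Finset S → Finset S → Prop}

theorem of_mem_of_mem (hE : IsEntailment E) {X Y : Finset S} {z : S} (hzX : z ∈ X) (hzY : z ∈ Y) :
    E X Y :=
  hE.1 X Y ⟨z, hzX, hzY⟩

theorem mono (hE : IsEntailment E) {X X' Y Y' : Finset S} (hX : X ⊆ X') (hY : Y ⊆ Y')
    (hXY : E X Y) : E X' Y' := by
  simpa only [Finset.union_eq_right.2 hX, Finset.union_eq_right.2 hY] using hE.2.1 X X' Y Y' hXY

theorem cut (hE : IsEntailment E) {X Y : Finset S} (z : S) (hXz : E X (insert z Y))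
    (hzX : E (insert z X) Y) : E X Y :=
  hE.2.2 X Y z hXz hzX

theorem cut_singleton (hE : IsEntailment E) {W X Y : Finset S} {z : S} (hWz : E W {z})
    (hzX : E (insert z X) Y) : E (W ∪ X) Y :=
  hE.cut z (hE.mono Finset.subset_union_left (by simp) hWz)
    (hE.mono (Finset.insert_subset_insert z Finset.subset_union_right) subset_rfl hzX)

theorem trans_singleton (hE : IsEntailment E) {X Y : Finset S} {z : S} (hXz : E X {z})
    (hzY : E {z} Y) : E X Y := by
  simpa only [Finset.union_empty] using hE.cut_singleton (X := ∅) hXz hzY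

theorem cut_finset (hE : IsEntailment E) {X Y Z : Finset S} (hXZ : E X (Z ∪ Y))
    (hZ : ∀ z ∈ Z, E (insert z X) Y) : E X Y := by
  induction Z using Finset.induction_on with
  | empty => simpa only [Finset.empty_union] using hXZ
  | insert z Z _ ih =>
    have hzX : E (insert z X) (Z ∪ Y) :=
      hE.mono subset_rfl Finset.subset_union_right (hZ z (Finset.mem_insert_self z Z))
    have hXZ' : E X (Z ∪ Y) := hE.cut z (by rwa [← Finset.insert_union]) hzX
    exact ih hXZ' fun w hw => hZ w (Finset.mem_insert_of_mem hw)

theorem symm_of_total_of_functional {α β : Type*} [DecidableEq α] [DecidableEq β] [Fintype β]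
    {E : Finset (α × β) → Finset (α × β) → Prop} (hE : IsEntailment E) {x y : α}
    (total : E ∅ (Finset.univ.image fun b => (x, b)))
    (functional : ∀ a b, a ≠ b → E {(y, a), (y, b)} ∅)
    (hxy : ∀ b, E {(x, b)} {(y, b)}) (a : β) : E {(y, a)} {(x, a)} := by
  refine hE.cut_finset (hE.mono (Finset.empty_subset _) Finset.subset_union_left total) ?_
  simp only [Finset.forall_mem_image, Finset.mem_univ, forall_const]
  intro b
  obtain rfl | hba := eq_or_ne b a
  · exact hE.of_mem_of_mem (Finset.mem_insert_self _ _) (Finset.mem_singleton_self _)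
  · have inconsistent : E {(x, b), (y, a)} ∅ := hE.cut_singleton (hxy b) (functional b a hba)
    exact hE.mono subset_rfl (Finset.empty_subset _) inconsistent

end IsEntailment

namespace HeytingEntails

variable {H B}

theorem of_heytingAxioms {X Y : Finset (H × B)} (hXY : HeytingAxioms H B X Y) :
    HeytingEntails H B X Y :=
  fun _ _ hax => hax X Y hXY

theorem isEntailment : IsEntailment (HeytingEntails H B) :=
  ⟨fun _ _ hXY _ hE _ => hE.1 _ _ hXY,
    fun _ _ _ _ hXY E hE hax => hE.2.1 _ _ _ _ (hXY E hE hax),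
    fun _ _ z hXz hzX E hE hax => hE.cut z (hXz E hE hax) (hzX E hE hax)⟩

theorem functional (x : H) (a b : B) (hab : a ≠ b) : HeytingEntails H B {(x, a), (x, b)} ∅ :=
  of_heytingAxioms <| .inl ⟨x, a, b, hab, rfl, rfl⟩

theorem total (x : H) : HeytingEntails H B ∅ (Finset.univ.image fun a : B => (x, a)) :=
  of_heytingAxioms <| .inr <| .inr <| .inr <| .inr <| .inr <| .inr ⟨x, rfl, rfl⟩

protected theorem bot : HeytingEntails H B ∅ {(⊥, ⊥)} :=
  of_heytingAxioms <| .inr <| .inr <| .inr <| .inr <| .inl ⟨rfl, rfl⟩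

protected theorem himp (x y : H) (a b : B) :
    HeytingEntails H B {(x, a), (y, b)} {(x ⇨ y, a ⇨ b)} :=
  of_heytingAxioms <| .inr <| .inr <| .inr <| .inl ⟨x, y, a, b, rfl, rfl⟩

protected theorem compl (x : H) (a : B) : HeytingEntails H B {(x, a)} {(xᶜ, aᶜ)} := by
  have himp_bot_entails : HeytingEntails H B {(⊥, ⊥), (x, a)} {(xᶜ, aᶜ)} := by
    rw [Finset.pair_comm, ← himp_bot x, ← himp_bot a]
    exact HeytingEntails.himp x ⊥ a ⊥
  simpa only [Finset.empty_union] using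
    isEntailment.cut_singleton HeytingEntails.bot himp_bot_entails

protected theorem compl_compl (x : H) (a : B) : HeytingEntails H B {(x, a)} {(xᶜᶜ, a)} := by
  simpa only [compl_compl] using
    isEntailment.trans_singleton (HeytingEntails.compl x a) (HeytingEntails.compl xᶜ aᶜ)

end HeytingEntails

theorem stmt16 {H B : Type*} [HeytingAlgebra H] [BooleanAlgebra B]
    [Fintype B] [DecidableEq H] [DecidableEq B] (x : H) (a : B) :
    HeytingEntails H B {(x, a)} {(xᶜᶜ, a)} ∧ HeytingEntails H B {(xᶜᶜ, a)} {(x, a)} :=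
  ⟨HeytingEntails.compl_compl x a,
    HeytingEntails.isEntailment.symm_of_total_of_functional (HeytingEntails.total x)
      (HeytingEntails.functional xᶜᶜ) (HeytingEntails.compl_compl x) a⟩
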